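/- The decryption program satisfies non-interference under its declassification policy: let p_dec be the program 'msg := cipher × key; paddingOk := if(msg mod 256 = 0)then(1)else(0); if (paddingOk = 1) { checkSum := (msg div 256) mod 256; if (¬(checkSum = −1)) { result := msg } else { result := −1 } } else { result := −1 }', and let φ be the formula ((cipher × key) mod 256 = 0) ∧ ¬(((cipher × key) div 256) mod 256 = −1). Then for all states s1, s2 such that (i) s1(result) = s2(result), (ii) val_{s1}(φ) = val_{s2}(φ), and (iii) if val_{s1}(φ) = val_{s2}(φ) = true then s1(cipher) · s1(key) = s2(cipher) · s2(key), and (p_dec, s1) ⇓ s1' and (p_dec, s2) ⇓ s2', it holds that s1'(result) = s2'(result). (This is Definition 6 non-interference for the two-level policy where only result is low and the declassification pairs to the low level are {(true, φ), (φ, cipher × key)}.) -/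

import Mathlib

/-!
The program is loop-free, so inverting the big-step derivation along its three possible paths
determines the final value of `result` as a function of the initial state (`pDec_result`): it is
`cipher * key` when `φDec` holds and `-1` otherwise. Both the truth value of `φDec` and, when it
is true, the product `cipher * key` agree on the two initial states, so the final values agree.
-/

/-- Program variables: a fixed countable set. -/
abbrev PV := ℕ

/-- A state assigns an integer to every program variable. -/
abbrev State := PV → ℤ

mutual
/-- Terms of the imperative language. -/
inductive Term : Type
  | lit : ℤ → Term
  | var : PV → Term
  | add : Term → Term → Term
  | sub : Term → Term → Term
  | mul : Term → Term → Term
  | div : Term → Term → Term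
  | mod : Term → Term → Term
  | ite : Formula → Term → Term → Term

/-- Boolean formulas of the imperative language. -/
inductive Formula : Type
  | tt : Formula
  | ff : Formula
  | eq : Term → Term → Formula
  | lt : Term → Term → Formula
  | le : Term → Term → Formula
  | not : Formula → Formula
  | and : Formula → Formula → Formula
  | or : Formula → Formula → Formula
end

mutual
/-- Standard evaluation of terms. -/
def evalT (s : State) : Term → ℤ
  | .lit n => n
  | .var x => s x
  | .add a b => evalT s a + evalT s b
  | .sub a b => evalT s a - evalT s b
  | .mul a b => evalT s a * evalT s b
  | .div a b => evalT s a / evalT s b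
  | .mod a b => evalT s a % evalT s b
  | .ite φ a b => if evalF s φ then evalT s a else evalT s b

/-- Standard evaluation of formulas. -/
def evalF (s : State) : Formula → Bool
  | .tt => true
  | .ff => false
  | .eq a b => evalT s a == evalT s b
  | .lt a b => decide (evalT s a < evalT s b)
  | .le a b => decide (evalT s a ≤ evalT s b)
  | .not φ => !(evalF s φ)
  | .and φ ψ => evalF s φ && evalF s ψ
  | .or φ ψ => evalF s φ || evalF s ψ
end

/-- Programs of the imperative language. -/
inductive Prog : Type
  | assign : PV → Term → Prog
  | ite : Formula → Prog → Prog → Prog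
  | while : Formula → Prog → Prog
  | seq : Prog → Prog → Prog

/-- Big-step operational semantics: `(p , s) ⇓ s'`. -/
inductive BigStep : Prog → State → State → Prop
  | assign (x : PV) (t : Term) (s : State) :
      BigStep (.assign x t) s (Function.update s x (evalT s t))
  | seq {p q : Prog} {s s' s'' : State} :
      BigStep p s s' → BigStep q s' s'' → BigStep (.seq p q) s s''
  | iteTrue {φ : Formula} {p q : Prog} {s s' : State} :
      evalF s φ = true → BigStep p s s' → BigStep (.ite φ p q) s s'
  | iteFalse {φ : Formula} {p q : Prog} {s s' : State} :
      evalF s φ = false → BigStep q s s' → BigStep (.ite φ p q) s s'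
  | whileFalse {φ : Formula} {p : Prog} {s : State} :
      evalF s φ = false → BigStep (.while φ p) s s
  | whileTrue {φ : Formula} {p : Prog} {s s' s'' : State} :
      evalF s φ = true → BigStep p s s' → BigStep (.while φ p) s' s'' →
      BigStep (.while φ p) s s''

/-- `X` is a dependency set for the term `t` under the program `p`. -/
def DepSet (X : Set PV) (t : Term) (p : Prog) : Prop :=
  ∀ s1 s2 s1' s2' : State, BigStep p s1 s1' → BigStep p s2 s2' →
    (∀ y ∈ X, s1 y = s2 y) → evalT s1' t = evalT s2' t

/-- Distinct program variables of the decryption program. -/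
def cipher : PV := 0
def key : PV := 1
def msg : PV := 2
def paddingOk : PV := 3
def checkSum : PV := 4
def result : PV := 5

/-- The decryption program of Fig. 1. -/
def pDec : Prog :=
  .seq (.assign msg (.mul (.var cipher) (.var key)))
    (.seq
      (.assign paddingOk
        (.ite (.eq (.mod (.var msg) (.lit 256)) (.lit 0)) (.lit 1) (.lit 0)))
      (.ite (.eq (.var paddingOk) (.lit 1))
        (.seq (.assign checkSum (.mod (.div (.var msg) (.lit 256)) (.lit 256)))
          (.ite (.not (.eq (.var checkSum) (.lit (-1))))
            (.assign result (.var msg))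
            (.assign result (.lit (-1)))))
        (.assign result (.lit (-1)))))

/-- The declassification condition: valid padding and valid checksum. -/
def φDec : Formula :=
  .and (.eq (.mod (.mul (.var cipher) (.var key)) (.lit 256)) (.lit 0))
       (.not (.eq (.mod (.div (.mul (.var cipher) (.var key)) (.lit 256)) (.lit 256))
                  (.lit (-1))))

/-- The final value of `result`: the plaintext when the initial state satisfies `φDec`, and `-1`
otherwise. Hence `result` reveals only what the declassification pairs allow. -/
theorem pDec_result {s s' : State} (h : BigStep pDec s s') :
    s' result = if evalF s φDec = true then s cipher * s key else -1 := by
  unfold pDec at h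
  obtain _ | ⟨⟨⟩, _ | ⟨⟨⟩, h⟩⟩ := h
  cases h with
  | iteTrue hpad h =>
    obtain _ | ⟨⟨⟩, h⟩ := h
    cases h with
    | iteTrue hsum h =>
      cases h
      simp_all [evalT, evalF, φDec, cipher, key, msg, paddingOk, checkSum, result]
    | iteFalse hsum h =>
      cases h
      simp_all [evalT, evalF, φDec, cipher, key, msg, paddingOk, checkSum, result]
  | iteFalse hpad h =>
    cases h
    simp_all [evalT, evalF, φDec, cipher, key, msg, paddingOk, result]

/-- The decryption program satisfies non-interference under its
declassification policy (only `result` is low; the declassification pairs to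
the low level are `(true, φDec)` and `(φDec, cipher × key)`). -/
theorem decryption_noninterfering :
    ∀ s1 s2 s1' s2' : State,
      s1 result = s2 result →
      evalF s1 φDec = evalF s2 φDec →
      (evalF s1 φDec = true → evalF s2 φDec = true →
        s1 cipher * s1 key = s2 cipher * s2 key) →
      BigStep pDec s1 s1' → BigStep pDec s2 s2' →
      s1' result = s2' result := by
  intro s1 s2 s1' s2' _ hφ hmul h1 h2
  rw [pDec_result h1, pDec_result h2, hφ]
  split_ifs with hs
  · exact hmul (hφ.trans hs) hs
  · rfl
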